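/- arXiv:1412.1033 — 5 statements merged into one kernel-verified Lean document; each statement's English description precedes it below -/
import Mathlib

section
/- Let P be the product of a reduced sequence of t ≥ 1 matrices, each taken from {R₁, R₂, R₃, R₁⁻¹, R₂⁻¹, R₃⁻¹}, viewed as a 3×3 matrix over ℚ. Then every entry of 5^t·P is an integer, and at least one entry of 5^t·P is not divisible by 5; equivalently, at least one entry of P, written as a fraction in lowest terms, has denominator exactly 5^t. -/
open Matrix

/-- The three rational rotation matrices `R₁, R₂, R₃`. -/
def Rgen : Fin 3 → Matrix (Fin 3) (Fin 3) ℚ :=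
  ![!![1, 0, 0; 0, -3/5, 4/5; 0, -4/5, -3/5],
    !![-3/5, 0, -4/5; 0, 1, 0; 4/5, 0, -3/5],
    !![-3/5, 4/5, 0; -4/5, -3/5, 0; 0, 0, 1]]

/-- The factor corresponding to the letter `(i, b)`: `Rᵢ` if `b = true`,
`Rᵢ⁻¹` if `b = false`. -/
noncomputable def RgenLetter (p : Fin 3 × Bool) : Matrix (Fin 3) (Fin 3) ℚ :=
  if p.2 then Rgen p.1 else (Rgen p.1)⁻¹

/-- The integer matrix `5 * RgenLetter p`. -/
def ILetter (p : Fin 3 × Bool) : Matrix (Fin 3) (Fin 3) ℤ :=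
  let A : Fin 3 → Matrix (Fin 3) (Fin 3) ℤ :=
    ![!![5, 0, 0; 0, -3, 4; 0, -4, -3],
      !![-3, 0, -4; 0, 5, 0; 4, 0, -3],
      !![-3, 4, 0; -4, -3, 0; 0, 0, 5]]
  if p.2 then A p.1 else (A p.1)ᵀ

/-- Column factor of the rank-one reduction mod 5. -/
def uvec (p : Fin 3 × Bool) : Fin 3 → ZMod 5 :=
  if p.2 then (![![0, 2, 1], ![1, 0, 2], ![2, 1, 0]] : Fin 3 → Fin 3 → ZMod 5) p.1
  else (![![0, 1, 2], ![2, 0, 1], ![1, 2, 0]] : Fin 3 → Fin 3 → ZMod 5) p.1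

/-- Row factor of the rank-one reduction mod 5: that of the inverse letter. -/
def vvec (p : Fin 3 × Bool) : Fin 3 → ZMod 5 := uvec (p.1, !p.2)

lemma ILetter_mod (p : Fin 3 × Bool) (i j : Fin 3) :
    ((ILetter p i j : ℤ) : ZMod 5) = uvec p i * vvec p j := by
  revert p i j; decide

lemma uvec_ne (p : Fin 3 × Bool) : ∃ i, uvec p i ≠ 0 := by
  revert p; decide

lemma pair_ne (p q : Fin 3 × Bool) (h : q ≠ (p.1, !p.2)) :
    vvec p 0 * uvec q 0 + vvec p 1 * uvec q 1 + vvec p 2 * uvec q 2 ≠ 0 := by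
  revert p q; decide

lemma letter_eq (p : Fin 3 × Bool) :
    (5 : ℚ) • RgenLetter p = (ILetter p).map (Int.cast : ℤ → ℚ) := by
  have key : ∀ i : Fin 3, (Rgen i)⁻¹ = (Rgen i)ᵀ := by
    intro i
    apply Matrix.inv_eq_right_inv
    ext a b
    fin_cases i <;> fin_cases a <;> fin_cases b <;>
      norm_num [Rgen, Matrix.mul_apply, Fin.sum_univ_succ]
  obtain ⟨i, b⟩ := p
  ext a c
  cases b <;> simp only [RgenLetter, key] <;>
  fin_cases i <;> fin_cases a <;> fin_cases c <;>
    norm_num [Rgen, ILetter]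

lemma prod_eq (w : List (Fin 3 × Bool)) :
    (5 : ℚ) ^ w.length • (w.map RgenLetter).prod
      = ((w.map ILetter).prod).map (Int.cast : ℤ → ℚ) := by
  induction w with
  | nil => simp
  | cons p w ih =>
    have hm : ∀ A B : Matrix (Fin 3) (Fin 3) ℤ, (A * B).map (Int.cast : ℤ → ℚ)
        = A.map (Int.cast : ℤ → ℚ) * B.map (Int.cast : ℤ → ℚ) := fun A B =>
      Matrix.map_mul (f := Int.castRingHom ℚ)
    rw [List.map_cons, List.prod_cons, List.map_cons, List.prod_cons, hm, ← ih, ← letter_eq,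
      List.length_cons, Matrix.smul_mul, Matrix.mul_smul, smul_smul, pow_succ']

lemma prod_mod (w : List (Fin 3 × Bool)) : ∀ p : Fin 3 × Bool,
    (p :: w).IsChain (fun p q => q ≠ (p.1, !p.2)) →
    ∃ x : Fin 3 → ZMod 5, (∃ j, x j ≠ 0) ∧
      ∀ i j, (((((p :: w).map ILetter).prod i j : ℤ)) : ZMod 5) = uvec p i * x j := by
  have : Fact (Nat.Prime 5) := ⟨by norm_num⟩
  induction w with
  | nil =>
    intro p _
    exact ⟨vvec p, uvec_ne _, fun i j => by simpa using ILetter_mod p i j⟩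
  | cons q w ih =>
    intro p h
    rw [List.isChain_cons_cons] at h
    obtain ⟨x, ⟨j, hj⟩, hx⟩ := ih q h.2
    refine ⟨fun k => (vvec p 0 * uvec q 0 + vvec p 1 * uvec q 1 + vvec p 2 * uvec q 2) * x k,
      ⟨j, mul_ne_zero (pair_ne p q h.1) hj⟩, fun i k => ?_⟩
    rw [List.map_cons, List.prod_cons, Matrix.mul_apply, Fin.sum_univ_three]
    push_cast
    rw [hx, hx, hx, ILetter_mod, ILetter_mod, ILetter_mod]
    ring

theorem stmt2 (t : ℕ) (ht : 1 ≤ t) (w : List (Fin 3 × Bool)) (hlen : w.length = t)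
    (hred : w.Chain' (fun p q => q ≠ (p.1, !p.2)))
    (P : Matrix (Fin 3) (Fin 3) ℚ) (hP : P = (w.map RgenLetter).prod) :
    (∀ i j, ∃ n : ℤ, (5 : ℚ) ^ t * P i j = (n : ℚ)) ∧
    (∃ i j, ∀ n : ℤ, (5 : ℚ) ^ t * P i j = (n : ℚ) → ¬ (5 : ℤ) ∣ n) ∧
    (∃ i j, (P i j).den = 5 ^ t) := by
  have : Fact (Nat.Prime 5) := ⟨by norm_num⟩
  have hE : ∀ i j, (5 : ℚ) ^ t * P i j = (((w.map ILetter).prod i j : ℤ) : ℚ) := by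
    intro i j
    have := congrFun (congrFun (prod_eq w) i) j
    rw [hlen, ← hP] at this
    simpa using this
  have hN : ∃ i j, ¬ (5 : ℤ) ∣ (w.map ILetter).prod i j := by
    cases w with
    | nil => simp at hlen; omega
    | cons p w =>
      obtain ⟨x, ⟨j, hj⟩, hx⟩ := prod_mod w p hred
      obtain ⟨i, hi⟩ := uvec_ne p
      refine ⟨i, j, fun hd => ?_⟩
      have h0 := (ZMod.intCast_zmod_eq_zero_iff_dvd _ 5).2 (by exact_mod_cast hd)
      rw [hx] at h0
      exact mul_ne_zero hi hj h0
  obtain ⟨i, j, hij⟩ := hN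
  refine ⟨fun i j => ⟨_, hE i j⟩, ⟨i, j, fun n hn => ?_⟩, ⟨i, j, ?_⟩⟩
  · rw [hE] at hn
    have : (w.map ILetter).prod i j = n := by exact_mod_cast hn
    rwa [← this]
  · have hPe : P i j = (((w.map ILetter).prod i j : ℤ) : ℚ) / (((5 : ℤ) ^ t : ℤ) : ℚ) := by
      rw [← hE]; push_cast; field_simp
    have hc : Nat.Coprime ((w.map ILetter).prod i j).natAbs ((5 : ℤ) ^ t).natAbs := by
      rw [Int.natAbs_pow]
      apply Nat.Coprime.pow_right
      apply Nat.Coprime.symm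
      refine (Nat.Prime.coprime_iff_not_dvd (by norm_num)).2 fun hd => hij ?_
      exact Int.natAbs_dvd_natAbs.1 hd
    have := Rat.den_div_eq_of_coprime (by positivity) hc
    rw [← hPe] at this
    exact_mod_cast this
end

section
/- The group homomorphism from the free group on three generators to the group of invertible 3×3 matrices over ℚ that sends the three generators to R₁, R₂, R₃ respectively is injective; that is, R₁, R₂, R₃ are free generators of the subgroup of SO(3) that they generate. -/
open Matrix

/-- `5 R_i^{±1}` as an integer matrix. -/
def Ngen : Fin 3 × Bool → Matrix (Fin 3) (Fin 3) ℤ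
  | (0, true) => !![5, 0, 0; 0, -3, 4; 0, -4, -3]
  | (0, false) => !![5, 0, 0; 0, -3, -4; 0, 4, -3]
  | (1, true) => !![-3, 0, -4; 0, 5, 0; 4, 0, -3]
  | (1, false) => !![-3, 0, 4; 0, 5, 0; -4, 0, -3]
  | (2, true) => !![-3, 4, 0; -4, -3, 0; 0, 0, 5]
  | (2, false) => !![-3, -4, 0; 4, -3, 0; 0, 0, 5]

/-- Reduction modulo 5. -/
def Mgen (a : Fin 3 × Bool) : Matrix (Fin 3) (Fin 3) (ZMod 5) :=
  (Ngen a).map (Int.castRingHom (ZMod 5))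

/-- The image of the all-ones vector. -/
def ugen (a : Fin 3 × Bool) : Fin 3 → ZMod 5 := Mgen a *ᵥ (fun _ => 1)

lemma ugen_ne (a : Fin 3 × Bool) : ugen a ≠ 0 := by
  revert a; decide

lemma Mgen_ugen (a b : Fin 3 × Bool) (h : a.1 = b.1 → a.2 = b.2) :
    ∃ c : ZMod 5, c ≠ 0 ∧ Mgen a *ᵥ ugen b = c • ugen a := by
  revert a b; decide

lemma prod_mulVec (L : List (Fin 3 × Bool)) : ∀ a, FreeGroup.IsReduced (a :: L) →
    ∃ c : ZMod 5, c ≠ 0 ∧ ((a :: L).map Mgen).prod *ᵥ (fun _ => 1) = c • ugen a := by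
  induction L with
  | nil => intro a _; exact ⟨1, by decide, by simp [ugen]⟩
  | cons b L ih =>
    intro a h
    rw [FreeGroup.IsReduced, List.isChain_cons_cons] at h
    obtain ⟨c, hc, e⟩ := ih b h.2
    obtain ⟨d, hd, e'⟩ := Mgen_ugen a b h.1
    have : Fact (Nat.Prime 5) := ⟨by norm_num⟩
    refine ⟨c * d, mul_ne_zero hc hd, ?_⟩
    rw [List.map_cons, List.prod_cons, ← mulVec_mulVec, e, mulVec_smul, e', smul_smul]

lemma gen_mul (i : Fin 3) :
    (Ngen (i, false)).map (Int.castRingHom ℚ) * Rgen i = (5 : ℚ) • 1 := by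
  fin_cases i <;> ext j k <;> fin_cases j <;> fin_cases k <;>
    simp [Ngen, Rgen, Matrix.mul_apply, Fin.sum_univ_three] <;> norm_num

lemma gen_true (i : Fin 3) :
    (Ngen (i, true)).map (Int.castRingHom ℚ) = (5 : ℚ) • Rgen i := by
  fin_cases i <;> ext j k <;> fin_cases j <;> fin_cases k <;>
    simp [Ngen, Rgen] <;> norm_num

lemma prod_eq_s5 (φ : FreeGroup (Fin 3) →* GL (Fin 3) ℚ)
    (hφ : ∀ i : Fin 3, ((φ (FreeGroup.of i) : GL (Fin 3) ℚ) : Matrix (Fin 3) (Fin 3) ℚ) = Rgen i)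
    (L : List (Fin 3 × Bool)) :
    (L.map Ngen).prod.map (Int.castRingHom ℚ) =
      (5 : ℚ) ^ L.length • ((φ (FreeGroup.mk L) : GL (Fin 3) ℚ) : Matrix (Fin 3) (Fin 3) ℚ) := by
  induction L with
  | nil => simp [← FreeGroup.one_eq_mk]
  | cons a L ih =>
    have key : (Ngen a).map (Int.castRingHom ℚ) =
        (5 : ℚ) • ((φ (FreeGroup.mk [a]) : GL (Fin 3) ℚ) : Matrix (Fin 3) (Fin 3) ℚ) := by
      obtain ⟨i, b⟩ := a
      cases b with
      | true => rw [gen_true, ← hφ]; rfl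
      | false =>
        have h1 : FreeGroup.mk [(i, false)] = (FreeGroup.of i)⁻¹ := rfl
        have h2 := gen_mul i
        rw [← hφ] at h2
        rw [h1, map_inv]
        have h3 := congrArg (· * (((φ (FreeGroup.of i))⁻¹ : GL (Fin 3) ℚ) :
          Matrix (Fin 3) (Fin 3) ℚ)) h2
        simpa only [mul_assoc, Units.mul_inv, mul_one, smul_mul_assoc, one_mul] using h3
    have h4 : FreeGroup.mk (a :: L) = FreeGroup.mk [a] * FreeGroup.mk L := by
      rw [FreeGroup.mul_mk]; rfl
    rw [List.map_cons, List.prod_cons, Matrix.map_mul, ih, key, h4, map_mul, Units.val_mul,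
      smul_mul_smul_comm, List.length_cons, pow_succ']

/-- `R₁, R₂, R₃` freely generate the subgroup of `SO(3)` that they generate: the
homomorphism from the free group on three generators sending the generators to
`R₁, R₂, R₃` is injective. -/
theorem stmt5 (φ : FreeGroup (Fin 3) →* GL (Fin 3) ℚ)
    (hφ : ∀ i : Fin 3, ((φ (FreeGroup.of i) : GL (Fin 3) ℚ) : Matrix (Fin 3) (Fin 3) ℚ) = Rgen i) :
    Function.Injective φ := by
  rw [injective_iff_map_eq_one]
  intro g hg
  have hr : FreeGroup.IsReduced g.toWord := FreeGroup.isReduced_toWord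
  have hp := prod_eq_s5 φ hφ g.toWord
  rw [FreeGroup.mk_toWord, hg] at hp
  rw [← FreeGroup.toWord_eq_nil_iff]
  cases hL : g.toWord with
  | nil => rfl
  | cons a L =>
    exfalso
    rw [hL] at hr hp
    obtain ⟨c, hc, e⟩ := prod_mulVec L a hr
    have : Fact (Nat.Prime 5) := ⟨by norm_num⟩
    have h5 : ((a :: L).map Ngen).prod =
        (5 : ℤ) ^ (a :: L).length • (1 : Matrix (Fin 3) (Fin 3) ℤ) := by
      ext i j
      have := congrFun (congrFun hp i) j
      simp only [Matrix.map_apply, Matrix.smul_apply, Units.val_one, Matrix.one_apply,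
        smul_eq_mul, eq_intCast] at this ⊢
      split_ifs at this ⊢ <;> exact_mod_cast this
    have h6 : ((a :: L).map Mgen).prod = 0 := by
      have : ((a :: L).map Mgen).prod =
          (Int.castRingHom (ZMod 5)).mapMatrix ((a :: L).map Ngen).prod := by
        rw [map_list_prod, List.map_map]; rfl
      rw [this, h5]
      ext i j
      have h50 : (5 : ZMod 5) = 0 := rfl
      rw [RingHom.mapMatrix_apply, Matrix.map_apply, Matrix.smul_apply, smul_eq_mul, map_mul,
        map_pow, map_ofNat, h50, List.length_cons, pow_succ, mul_zero, zero_mul]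
      rfl
    rw [h6, zero_mulVec] at e
    exact (smul_ne_zero hc (ugen_ne a)) e.symm
end

section
/- For every integer t ≥ 1, the number of quadruples (a, b, c, d) of integers with a² + b² + c² + d² = 5^t such that not all of a, b, c, d are divisible by 5 is exactly 48·5^{t−1}. -/
namespace FourSq

abbrev Q := ℤ × ℤ × ℤ × ℤ

/-- Quaternion multiplication. -/
def mul (p x : Q) : Q :=
  (p.1 * x.1 - p.2.1 * x.2.1 - p.2.2.1 * x.2.2.1 - p.2.2.2 * x.2.2.2,
   p.1 * x.2.1 + p.2.1 * x.1 + p.2.2.1 * x.2.2.2 - p.2.2.2 * x.2.2.1,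
   p.1 * x.2.2.1 - p.2.1 * x.2.2.2 + p.2.2.1 * x.1 + p.2.2.2 * x.2.1,
   p.1 * x.2.2.2 + p.2.1 * x.2.2.1 - p.2.2.1 * x.2.1 + p.2.2.2 * x.1)

def conj (p : Q) : Q := (p.1, -p.2.1, -p.2.2.1, -p.2.2.2)

def nrm (x : Q) : ℤ := x.1 ^ 2 + x.2.1 ^ 2 + x.2.2.1 ^ 2 + x.2.2.2 ^ 2

def D (x : Q) : Prop :=
  (5 : ℤ) ∣ x.1 ∧ (5 : ℤ) ∣ x.2.1 ∧ (5 : ℤ) ∣ x.2.2.1 ∧ (5 : ℤ) ∣ x.2.2.2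

instance : DecidablePred D := fun x => by unfold D; infer_instance

noncomputable def box (a b : ℤ) : Finset Q :=
  Finset.Icc a b ×ˢ Finset.Icc a b ×ˢ Finset.Icc a b ×ˢ Finset.Icc a b

noncomputable def S : Finset Q := (box (-2) 2).filter (fun x => nrm x = 5)

noncomputable def P (t : ℕ) : Finset Q := (box (-5 ^ t) (5 ^ t)).filter (fun x => nrm x = 5 ^ t ∧ ¬ D x)

lemma card_S : S.card = 48 := by decide +kernel

lemma key : ∀ x ∈ (box 0 4).filter (fun x => 5 ∣ nrm x ∧ ¬ D x),
    (S.filter (fun p => D (mul (conj p) x))).card = 8 ∧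
    (S.filter (fun p => ¬ D (mul p x))).card = 40 := by decide +kernel

def red (x : Q) : Q := (x.1 % 5, x.2.1 % 5, x.2.2.1 % 5, x.2.2.2 % 5)

lemma dvd5 (a : ℤ) : (5 : ℤ) ∣ a ↔ (a : ZMod 5) = 0 := by
  have := ZMod.intCast_zmod_eq_zero_iff_dvd a 5
  simpa using this.symm

lemma cast_mod (a : ℤ) : ((a % 5 : ℤ) : ZMod 5) = a := by
  have := ZMod.intCast_mod a 5
  simpa using this

lemma D_mul_red (p x : Q) : D (mul p (red x)) ↔ D (mul p x) := by
  simp only [D, mul, red, dvd5]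
  push_cast [cast_mod]
  rfl

lemma D_red (x : Q) : D (red x) ↔ D x := by
  simp only [D, red, dvd5, cast_mod]

lemma nrm_red (x : Q) : 5 ∣ nrm (red x) ↔ 5 ∣ nrm x := by
  simp only [nrm, red, dvd5]
  push_cast [cast_mod]
  rfl

lemma key_int (x : Q) (h : 5 ∣ nrm x) (hx : ¬ D x) :
    (S.filter (fun p => D (mul (conj p) x))).card = 8 ∧
    (S.filter (fun p => ¬ D (mul p x))).card = 40 := by
  have := key (red x) (by
    rw [Finset.mem_filter]
    refine ⟨?_, (nrm_red x).2 h, fun h' => hx ((D_red x).1 h')⟩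
    simp only [box, red, Finset.mem_product, Finset.mem_Icc]
    omega)
  simpa only [D_mul_red] using this

lemma nrm_mul (p x : Q) : nrm (mul p x) = nrm p * nrm x := by
  simp only [nrm, mul]; ring

lemma nrm_conj (p : Q) : nrm (conj p) = nrm p := by
  simp only [nrm, conj]; ring

def smul5 (x : Q) : Q := (5 * x.1, 5 * x.2.1, 5 * x.2.2.1, 5 * x.2.2.2)
def div5 (x : Q) : Q := (x.1 / 5, x.2.1 / 5, x.2.2.1 / 5, x.2.2.2 / 5)

lemma div5_smul5 (x : Q) : div5 (smul5 x) = x := by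
  simp [div5, smul5]

lemma smul5_div5 (x : Q) (h : D x) : smul5 (div5 x) = x := by
  obtain ⟨a, b, c, d⟩ := x
  obtain ⟨h1, h2, h3, h4⟩ := h
  simp only [div5, smul5, Prod.mk.injEq]
  exact ⟨Int.mul_ediv_cancel' h1, Int.mul_ediv_cancel' h2, Int.mul_ediv_cancel' h3,
    Int.mul_ediv_cancel' h4⟩

lemma smul5_inj {x y : Q} (h : smul5 x = smul5 y) : x = y := by
  rw [← div5_smul5 x, h, div5_smul5]

lemma D_smul5 (x : Q) : D (smul5 x) := by simp [D, smul5]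

lemma nrm_smul5 (x : Q) : nrm (smul5 x) = 25 * nrm x := by
  simp only [nrm, smul5]; ring

lemma mul_smul5 (p x : Q) : mul p (smul5 x) = smul5 (mul p x) := by
  simp only [mul, smul5, Prod.mk.injEq]
  refine ⟨?_, ?_, ?_, ?_⟩ <;> ring

lemma conj_mul_mul (p x : Q) (h : nrm p = 5) : mul (conj p) (mul p x) = smul5 x := by
  simp only [mul, conj, smul5, Prod.mk.injEq, ← h, nrm]
  refine ⟨?_, ?_, ?_, ?_⟩ <;> ring

lemma mul_conj_mul (p x : Q) (h : nrm p = 5) : mul p (mul (conj p) x) = smul5 x := by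
  simp only [mul, conj, smul5, Prod.mk.injEq, ← h, nrm]
  refine ⟨?_, ?_, ?_, ?_⟩ <;> ring

lemma D_mul (p x : Q) (h : D x) : D (mul p x) := by
  rw [← smul5_div5 x h, mul_smul5]; exact D_smul5 _

lemma mem_S {x : Q} : x ∈ S ↔ nrm x = 5 := by
  simp only [S, box, Finset.mem_filter, Finset.mem_product, Finset.mem_Icc,
    and_iff_right_iff_imp]
  intro h
  simp only [nrm] at h
  refine ⟨⟨?_, ?_⟩, ⟨?_, ?_⟩, ⟨?_, ?_⟩, ⟨?_, ?_⟩⟩ <;>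
    nlinarith [sq_nonneg x.1, sq_nonneg x.2.1, sq_nonneg x.2.2.1, sq_nonneg x.2.2.2]

lemma bnd {a m : ℤ} (h : a ^ 2 ≤ m) : -m ≤ a ∧ a ≤ m := by
  have h1 := Int.le_self_sq a
  have h2 := Int.le_self_sq (-a)
  rw [neg_sq] at h2
  constructor <;> linarith

lemma mem_P {t : ℕ} {x : Q} : x ∈ P t ↔ nrm x = 5 ^ t ∧ ¬ D x := by
  simp only [P, box, Finset.mem_filter, Finset.mem_product, Finset.mem_Icc,
    and_iff_right_iff_imp]
  rintro ⟨h, -⟩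
  simp only [nrm] at h
  refine ⟨bnd ?_, bnd ?_, bnd ?_, bnd ?_⟩ <;>
    nlinarith [sq_nonneg x.1, sq_nonneg x.2.1, sq_nonneg x.2.2.1, sq_nonneg x.2.2.2]

lemma P_one : P 1 = S := by
  ext x
  rw [mem_P, mem_S, pow_one, and_iff_left_iff_imp]
  intro h hD
  rw [← smul5_div5 x hD, nrm_smul5] at h
  omega

lemma count {T : Finset Q} (R : Q → Q → Prop) [∀ p x, Decidable (R p x)] (k : ℕ)
    (h : ∀ x ∈ T, (S.filter (fun p => R p x)).card = k) :
    ((S ×ˢ T).filter (fun z => R z.1 z.2)).card = T.card * k := by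
  rw [Finset.card_filter, Finset.sum_product_right, ← smul_eq_mul, ← Finset.sum_const]
  refine Finset.sum_congr rfl fun x hx => ?_
  rw [← h x hx, Finset.card_filter]

lemma step (t : ℕ) (ht : 1 ≤ t) : (P (t + 1)).card = 5 * (P t).card := by
  have hd : ∀ s, 1 ≤ s → ∀ x ∈ P s, 5 ∣ nrm x ∧ ¬ D x := fun s hs x hx =>
    ⟨(mem_P.1 hx).1 ▸ dvd_pow_self 5 (by omega), (mem_P.1 hx).2⟩
  have hA := count (T := P t) (fun p x => ¬ D (mul p x)) 40
    (fun x hx => (key_int x (hd t ht x hx).1 (hd t ht x hx).2).2)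
  have hB := count (T := P (t + 1)) (fun p x => D (mul (conj p) x)) 8
    (fun x hx => (key_int x (hd _ (by omega) x hx).1 (hd _ (by omega) x hx).2).1)
  have hAB : ((S ×ˢ P t).filter (fun z => ¬ D (mul z.1 z.2))).card =
      ((S ×ˢ P (t + 1)).filter (fun z => D (mul (conj z.1) z.2))).card := by
    refine Finset.card_nbij' (fun z => (z.1, mul z.1 z.2))
      (fun z => (z.1, div5 (mul (conj z.1) z.2))) ?_ ?_ ?_ ?_
    · rintro ⟨p, b⟩ h
      simp only [Finset.coe_filter, Finset.mem_product, Set.mem_ofPred_eq, mem_S, mem_P] at h ⊢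
      obtain ⟨⟨hp, hb, -⟩, hn⟩ := h
      refine ⟨⟨hp, ?_, hn⟩, ?_⟩
      · rw [nrm_mul, hp, hb]; ring
      · rw [conj_mul_mul _ _ hp]; exact D_smul5 _
    · rintro ⟨p, a⟩ h
      simp only [Finset.coe_filter, Finset.mem_product, Set.mem_ofPred_eq, mem_S, mem_P] at h ⊢
      obtain ⟨⟨hp, ha, hna⟩, hD⟩ := h
      have e := smul5_div5 _ hD
      have e2 : mul p (div5 (mul (conj p) a)) = a := by
        apply smul5_inj
        rw [← mul_smul5, e, mul_conj_mul _ _ hp]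
      refine ⟨⟨hp, ?_, fun h' => hna (e2 ▸ D_mul p _ h')⟩, by rwa [e2]⟩
      have := congrArg nrm e2
      rw [nrm_mul, hp, ha, pow_succ] at this
      linarith
    · rintro ⟨p, b⟩ h
      simp only [Finset.coe_filter, Finset.mem_product, Set.mem_ofPred_eq, mem_S] at h
      simp only [conj_mul_mul _ _ h.1.1, div5_smul5]
    · rintro ⟨p, a⟩ h
      simp only [Finset.coe_filter, Finset.mem_product, Set.mem_ofPred_eq, mem_S] at h
      obtain ⟨⟨hp, -⟩, hD⟩ := h
      simp only [Prod.mk.injEq, true_and]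
      apply smul5_inj
      rw [← mul_smul5, smul5_div5 _ hD, mul_conj_mul _ _ hp]
  omega

lemma card_P (t : ℕ) : (P (t + 1)).card = 48 * 5 ^ t := by
  induction t with
  | zero => rw [zero_add, P_one, card_S]; rfl
  | succ n ih => rw [step (n + 1) (by omega), ih, pow_succ]; ring

end FourSq

theorem stmt8 (t : ℕ) (ht : 1 ≤ t) :
    {x : ℤ × ℤ × ℤ × ℤ |
        x.1 ^ 2 + x.2.1 ^ 2 + x.2.2.1 ^ 2 + x.2.2.2 ^ 2 = 5 ^ t ∧
        ¬ ((5 : ℤ) ∣ x.1 ∧ (5 : ℤ) ∣ x.2.1 ∧ (5 : ℤ) ∣ x.2.2.1 ∧ (5 : ℤ) ∣ x.2.2.2)}.ncard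
      = 48 * 5 ^ (t - 1) := by
  obtain ⟨n, rfl⟩ : ∃ n, t = n + 1 := ⟨t - 1, by omega⟩
  rw [Nat.add_sub_cancel, ← FourSq.card_P n, ← Set.ncard_coe_finset]
  congr 1
  ext x
  rw [Finset.mem_coe, FourSq.mem_P]
  rfl
end

section
/- For every integer t ≥ 0, the number of quadruples (a, b, c, d) of integers with a² + b² + c² + d² = 5^t is exactly 2·(5^{t+1} − 1). -/
/-- Right multiplication of the quaternion `x` by `1 + b i + c j + d k`. -/
def rmulQ {R : Type} [CommRing R] (b c d : R) (x : R × R × R × R) : R × R × R × R :=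
  (x.1 - x.2.1 * b - x.2.2.1 * c - x.2.2.2 * d,
   x.1 * b + x.2.1 + x.2.2.1 * d - x.2.2.2 * c,
   x.1 * c - x.2.1 * d + x.2.2.1 + x.2.2.2 * b,
   x.1 * d + x.2.1 * c - x.2.2.1 * b + x.2.2.2)

/-- The six generators of norm 5. -/
def gB (i : Fin 6) : ℤ := ![2, -2, 0, 0, 0, 0] i
def gC (i : Fin 6) : ℤ := ![0, 0, 2, -2, 0, 0] i
def gD (i : Fin 6) : ℤ := ![0, 0, 0, 0, 2, -2] i

lemma g_norm (i : Fin 6) : gB i ^ 2 + gC i ^ 2 + gD i ^ 2 = 4 := by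
  revert i; decide

def solQ (t : ℕ) : Set (ℤ × ℤ × ℤ × ℤ) :=
  {x | x.1 ^ 2 + x.2.1 ^ 2 + x.2.2.1 ^ 2 + x.2.2.2 ^ 2 = 5 ^ t}

lemma solQ_finite (t : ℕ) : (solQ t).Finite := by
  have hI := Set.finite_Icc (-(5 : ℤ) ^ t) (5 ^ t)
  apply (hI.prod (hI.prod (hI.prod hI))).subset
  rintro ⟨a, b, c, d⟩ h
  simp only [solQ, Set.mem_ofPred_eq] at h
  have key : ∀ u : ℤ, u ^ 2 ≤ 5 ^ t → u ∈ Set.Icc (-(5 : ℤ) ^ t) (5 ^ t) := by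
    intro u hu
    have h1 := Int.le_self_sq u
    have h2 := Int.le_self_sq (-u)
    rw [neg_sq] at h2
    constructor <;> linarith
  have ha := sq_nonneg a
  have hb := sq_nonneg b
  have hc := sq_nonneg c
  have hd := sq_nonneg d
  exact ⟨key a (by linarith), key b (by linarith), key c (by linarith), key d (by linarith)⟩

noncomputable def solF (t : ℕ) : Finset (ℤ × ℤ × ℤ × ℤ) := (solQ_finite t).toFinset

lemma mem_solF (t : ℕ) (x : ℤ × ℤ × ℤ × ℤ) : x ∈ solF t ↔
    x.1 ^ 2 + x.2.1 ^ 2 + x.2.2.1 ^ 2 + x.2.2.2 ^ 2 = 5 ^ t := by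
  simp [solF, solQ]

def castQ (x : ℤ × ℤ × ℤ × ℤ) : ZMod 5 × ZMod 5 × ZMod 5 × ZMod 5 :=
  (x.1, x.2.1, x.2.2.1, x.2.2.2)

lemma castQ_eq_zero (x : ℤ × ℤ × ℤ × ℤ) : castQ x = 0 ↔
    (5 ∣ x.1 ∧ 5 ∣ x.2.1 ∧ 5 ∣ x.2.2.1 ∧ 5 ∣ x.2.2.2) := by
  have h := fun a : ℤ => ZMod.intCast_zmod_eq_zero_iff_dvd a 5
  simp only [castQ, Prod.ext_iff, Prod.fst_zero, Prod.snd_zero]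
  simp only [h]
  norm_num

lemma castQ_rmul (b c d : ℤ) (x : ℤ × ℤ × ℤ × ℤ) :
    castQ (rmulQ b c d x) = rmulQ (b : ZMod 5) c d (castQ x) := by
  simp [castQ, rmulQ]

lemma mod5 : ∀ a b c d : ZMod 5, a ^ 2 + b ^ 2 + c ^ 2 + d ^ 2 = 0 →
    (Finset.univ.filter fun i : Fin 6 =>
      rmulQ ((-gB i : ℤ) : ZMod 5) ((-gC i : ℤ) : ZMod 5) ((-gD i : ℤ) : ZMod 5)
        (a, b, c, d) = 0).card
      = 1 + if (a, b, c, d) = (0 : ZMod 5 × ZMod 5 × ZMod 5 × ZMod 5) then 5 else 0 := by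
  decide +kernel

/-- `x` is right divisible by the `i`-th generator. -/
def dv (i : Fin 6) (x : ℤ × ℤ × ℤ × ℤ) : Prop :=
  castQ (rmulQ (-gB i) (-gC i) (-gD i) x) = 0

instance (i : Fin 6) (x : ℤ × ℤ × ℤ × ℤ) : Decidable (dv i x) := by
  unfold dv; infer_instance

lemma rmul_conj (b c d : ℤ) (h : b ^ 2 + c ^ 2 + d ^ 2 = 4) (x : ℤ × ℤ × ℤ × ℤ) :
    rmulQ (-b) (-c) (-d) (rmulQ b c d x) = (5 * x.1, 5 * x.2.1, 5 * x.2.2.1, 5 * x.2.2.2) := by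
  have h' : b ^ 2 = 4 - c ^ 2 - d ^ 2 := by linarith
  simp only [rmulQ, Prod.mk.injEq]
  refine ⟨?_, ?_, ?_, ?_⟩ <;> ring_nf <;> rw [h'] <;> ring

lemma rmul_norm (b c d : ℤ) (h : b ^ 2 + c ^ 2 + d ^ 2 = 4) (x : ℤ × ℤ × ℤ × ℤ) :
    (rmulQ b c d x).1 ^ 2 + (rmulQ b c d x).2.1 ^ 2 + (rmulQ b c d x).2.2.1 ^ 2
      + (rmulQ b c d x).2.2.2 ^ 2
      = 5 * (x.1 ^ 2 + x.2.1 ^ 2 + x.2.2.1 ^ 2 + x.2.2.2 ^ 2) := by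
  have h' : (5 : ℤ) = 1 + b ^ 2 + c ^ 2 + d ^ 2 := by linarith
  rw [h']
  simp only [rmulQ]
  ring

lemma card_dv (t : ℕ) (i : Fin 6) : ((solF (t + 1)).filter (dv i)).card = (solF t).card := by
  have hg := g_norm i
  have hg' : (-gB i) ^ 2 + (-gC i) ^ 2 + (-gD i) ^ 2 = 4 := by simpa using hg
  symm
  apply Finset.card_bij (fun x _ => rmulQ (gB i) (gC i) (gD i) x)
  · intro x hx
    rw [mem_solF] at hx
    rw [Finset.mem_filter, mem_solF, rmul_norm _ _ _ hg, hx, dv, rmul_conj _ _ _ hg, castQ_eq_zero]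
    refine ⟨by ring, ?_⟩
    simp
  · intro x _ y _ hxy
    have h := congrArg (rmulQ (-gB i) (-gC i) (-gD i)) hxy
    simp only [rmul_conj _ _ _ hg, Prod.mk.injEq] at h
    obtain ⟨h1, h2, h3, h4⟩ := h
    ext <;> linarith
  · intro y hy
    rw [Finset.mem_filter, mem_solF, dv, castQ_eq_zero] at hy
    obtain ⟨hn, ⟨a, ha⟩, ⟨b, hb⟩, ⟨c, hc⟩, ⟨d, hd⟩⟩ := hy
    have hN := rmul_norm _ _ _ hg' y
    rw [ha, hb, hc, hd, hn, pow_succ 5 t] at hN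
    refine ⟨(a, b, c, d), ?_, ?_⟩
    · rw [mem_solF]
      simp only
      linarith
    · have h := rmul_conj _ _ _ hg' y
      have e : rmulQ (-gB i) (-gC i) (-gD i) y = (5 * a, 5 * b, 5 * c, 5 * d) := by
        ext <;> assumption
      rw [e] at h
      simp only [rmulQ, neg_neg, Prod.mk.injEq] at h
      obtain ⟨h1, h2, h3, h4⟩ := h
      simp only [rmulQ]
      ext <;> simp only <;> linarith

lemma count_dv (t : ℕ) (x : ℤ × ℤ × ℤ × ℤ) (hx : x ∈ solF (t + 1)) :
    (Finset.univ.filter fun i : Fin 6 => dv i x).card = 1 + if castQ x = 0 then 5 else 0 := by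
  rw [mem_solF] at hx
  have h := congrArg (fun z : ℤ => (z : ZMod 5)) hx
  have h5 : (5 : ZMod 5) = 0 := by decide
  simp only [Int.cast_add, Int.cast_pow, Int.cast_ofNat, h5, pow_succ (0 : ZMod 5) t,
    mul_zero] at h
  simp only [dv, castQ_rmul]
  exact mod5 _ _ _ _ h

lemma double_count (t : ℕ) :
    6 * (solF t).card = (solF (t + 1)).card
      + 5 * ((solF (t + 1)).filter fun x => castQ x = 0).card := by
  have h : ∑ i : Fin 6, ((solF (t + 1)).filter (dv i)).card
      = ∑ x ∈ solF (t + 1), (Finset.univ.filter fun i : Fin 6 => dv i x).card := by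
    simp only [Finset.card_filter]
    exact Finset.sum_comm
  rw [Finset.sum_congr rfl (fun x hx => count_dv t x hx)] at h
  simp only [card_dv, Finset.sum_add_distrib, ← Finset.sum_filter] at h
  simp at h
  linarith

lemma card_imprim_zero : ((solF 1).filter fun x => castQ x = 0).card = 0 := by
  rw [Finset.card_eq_zero, Finset.filter_eq_empty_iff]
  rintro ⟨a, b, c, d⟩ hx h
  rw [mem_solF] at hx
  rw [castQ_eq_zero] at h
  obtain ⟨⟨a, rfl⟩, ⟨b, rfl⟩, ⟨c, rfl⟩, ⟨d, rfl⟩⟩ := h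
  simp only [mul_pow] at hx
  omega

lemma card_imprim (t : ℕ) :
    ((solF (t + 2)).filter fun x => castQ x = 0).card = (solF t).card := by
  symm
  apply Finset.card_bij (fun x _ => (5 * x.1, 5 * x.2.1, 5 * x.2.2.1, 5 * x.2.2.2))
  · intro x hx
    rw [mem_solF] at hx
    rw [Finset.mem_filter, mem_solF, castQ_eq_zero]
    refine ⟨?_, by simp⟩
    rw [pow_add, ← hx]
    ring
  · intro x _ y _ h
    simp only [Prod.mk.injEq] at h
    obtain ⟨h1, h2, h3, h4⟩ := h
    ext <;> linarith
  · rintro ⟨a, b, c, d⟩ hx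
    rw [Finset.mem_filter, mem_solF, castQ_eq_zero] at hx
    obtain ⟨hx, ⟨a, rfl⟩, ⟨b, rfl⟩, ⟨c, rfl⟩, ⟨d, rfl⟩⟩ := hx
    refine ⟨(a, b, c, d), ?_, rfl⟩
    rw [mem_solF]
    rw [pow_add] at hx
    simp only [mul_pow] at hx ⊢
    linarith

lemma card_zero : (solF 0).card = 8 := by
  have : solF 0 = {((1 : ℤ), (0 : ℤ), (0 : ℤ), (0 : ℤ)), (-1, 0, 0, 0), (0, 1, 0, 0),
      (0, -1, 0, 0), (0, 0, 1, 0), (0, 0, -1, 0), (0, 0, 0, 1), (0, 0, 0, -1)} := by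
    ext ⟨a, b, c, d⟩
    rw [mem_solF]
    constructor
    · intro h
      simp only [pow_zero] at h
      have ha : -1 ≤ a ∧ a ≤ 1 := by constructor <;> nlinarith [sq_nonneg b, sq_nonneg c, sq_nonneg d]
      have hb : -1 ≤ b ∧ b ≤ 1 := by constructor <;> nlinarith [sq_nonneg a, sq_nonneg c, sq_nonneg d]
      have hc : -1 ≤ c ∧ c ≤ 1 := by constructor <;> nlinarith [sq_nonneg b, sq_nonneg a, sq_nonneg d]
      have hd : -1 ≤ d ∧ d ≤ 1 := by constructor <;> nlinarith [sq_nonneg b, sq_nonneg c, sq_nonneg a]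
      obtain ⟨ha1, ha2⟩ := ha
      obtain ⟨hb1, hb2⟩ := hb
      obtain ⟨hc1, hc2⟩ := hc
      obtain ⟨hd1, hd2⟩ := hd
      interval_cases a <;> interval_cases b <;> interval_cases c <;> interval_cases d <;>
        first | (exfalso; norm_num at h; done) | decide
    · intro h
      simp only [Finset.mem_insert, Finset.mem_singleton, Prod.mk.injEq] at h
      rcases h with h | h | h | h | h | h | h | h <;> obtain ⟨rfl, rfl, rfl, rfl⟩ := h <;> norm_num
  rw [this]
  decide

lemma card_solF (t : ℕ) : (solF t).card + 2 = 2 * 5 ^ (t + 1) := by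
  induction t using Nat.twoStepInduction with
  | zero => rw [card_zero]; norm_num
  | one =>
    have h := double_count 0
    rw [card_zero, zero_add, card_imprim_zero] at h
    omega
  | more t h0 h1 =>
    have h := double_count (t + 1)
    rw [show t + 1 + 1 = t + 2 from rfl, card_imprim] at h
    have e1 : 5 ^ (t + 1 + 1) = 5 * 5 ^ (t + 1) := by ring
    have e2 : 5 ^ (t + 2 + 1) = 25 * 5 ^ (t + 1) := by ring
    rw [e1] at h1
    rw [e2]
    omega

theorem stmt9 (t : ℕ) :
    {x : ℤ × ℤ × ℤ × ℤ |
        x.1 ^ 2 + x.2.1 ^ 2 + x.2.2.1 ^ 2 + x.2.2.2 ^ 2 = 5 ^ t}.ncard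
      = 2 * (5 ^ (t + 1) - 1) := by
  have h := card_solF t
  have e : (solQ t).ncard = (solF t).card := Set.ncard_eq_toFinset_card _ (solQ_finite t)
  change (solQ t).ncard = _
  rw [e]
  omega
end

section
/- Let M be a convex subset of ℂ, let t, k be natural numbers, and let z₁ ≠ z₂ be Gaussian integers such that z₁/√(5^t) ∈ M and z₂/√(5^t) ∈ M. Then there exist at least 5^k + 1 distinct Gaussian integers u such that u/√(5^{t+2k}) ∈ M. In particular, if the set of complex numbers of the form u/√(5^t) (u a Gaussian integer) lying in M has at least 2 elements, then for every k ≥ 0 the set of complex numbers of the form u/√(5^{t+2k}) lying in M has at least 1 + 5^k elements. -/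
/-- A Gaussian integer: a complex number with integer real and imaginary parts. -/
def IsGaussian (z : ℂ) : Prop := ∃ a b : ℤ, z = (a : ℂ) + (b : ℂ) * Complex.I

/-- If a convex set `M ⊆ ℂ` contains two distinct candidates of level `t`
(points `z/√(5^t)` with `z` a Gaussian integer), then it contains at least
`5^k + 1` distinct candidates of level `t + 2k`. -/
theorem stmt15 (M : Set ℂ) (hM : Convex ℝ M) (t k : ℕ)
    (z₁ z₂ : ℂ) (hz₁ : IsGaussian z₁) (hz₂ : IsGaussian z₂) (hne : z₁ ≠ z₂)
    (hm₁ : z₁ / ((Real.sqrt (5 ^ t) : ℝ) : ℂ) ∈ M)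
    (hm₂ : z₂ / ((Real.sqrt (5 ^ t) : ℝ) : ℂ) ∈ M) :
    ∃ S : Finset ℂ, S.card = 5 ^ k + 1 ∧
      ∀ u ∈ S, IsGaussian u ∧ u / ((Real.sqrt (5 ^ (t + 2 * k)) : ℝ) : ℂ) ∈ M := by
  obtain ⟨a, b, rfl⟩ := hz₁
  obtain ⟨c, d, rfl⟩ := hz₂
  set w₁ : ℂ := (a : ℂ) + (b : ℂ) * Complex.I with hw₁
  set w₂ : ℂ := (c : ℂ) + (d : ℂ) * Complex.I with hw₂
  have hs : Real.sqrt (5 ^ (t + 2 * k)) = Real.sqrt (5 ^ t) * 5 ^ k := by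
    rw [pow_add, Real.sqrt_mul (by positivity), mul_comm 2 k, pow_mul (5 : ℝ) k 2,
      Real.sqrt_sq (by positivity)]
  have hpos : Real.sqrt (5 ^ t) ≠ 0 := by positivity
  have hposC : ((Real.sqrt (5 ^ t) : ℝ) : ℂ) ≠ 0 := by exact_mod_cast hpos
  have hkC : (5 : ℂ) ^ k ≠ 0 := pow_ne_zero _ (by norm_num)
  refine ⟨(Finset.range (5 ^ k + 1)).image
    (fun j : ℕ => (5 : ℂ) ^ k * w₁ + (j : ℂ) * (w₂ - w₁)), ?_, ?_⟩
  · rw [Finset.card_image_of_injective, Finset.card_range]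
    intro i j hij
    have h := mul_right_cancel₀ (sub_ne_zero.mpr hne.symm) (add_left_cancel hij)
    exact_mod_cast h
  · intro u hu
    obtain ⟨j, hj, rfl⟩ := Finset.mem_image.mp hu
    have hj' : j ≤ 5 ^ k := Nat.lt_succ_iff.mp (Finset.mem_range.mp hj)
    have hjR : (j : ℝ) ≤ 5 ^ k := by exact_mod_cast hj'
    refine ⟨⟨5 ^ k * a + j * (c - a), 5 ^ k * b + j * (d - b), ?_⟩, ?_⟩
    · simp only [hw₁, hw₂]
      push_cast
      ring
    · have hq : (j : ℝ) / 5 ^ k ≤ 1 := (div_le_one (by positivity)).mpr hjR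
      have key := hM hm₁ hm₂ (sub_nonneg.mpr hq)
        (by positivity : (0 : ℝ) ≤ (j : ℝ) / 5 ^ k) (by ring)
      convert key using 1
      rw [hs]
      simp only [Complex.real_smul]
      push_cast
      field_simp
      ring
end
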